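/- arXiv:1110.4961 — 6 statements merged into one kernel-verified Lean document; each statement's English description precedes it below -/
import Mathlib

section
/- Suppose α_{j*}^{(0)} > 0 for some integer j* ≥ 1, so that the functions f_j^{(0)} converge in L^∞([1−K,K)) to a limit function f. Then for every j ≥ 1 with α_j^{(0)} > 0, one has the error bound sup_{x ∈ [1−K,K)} |f_j^{(0)}(x) − f(x)| ≤ C_j^{(0)} · 2^{−j α_j^{(0)}}. -/
/-! Write `u = u^(0)`, `v = u^(1)` and `g = g^(0)`, `F = f^(1)`. The estimate is a telescoping one.

* Refining once, `g_{j+1,2k+m} - g_{j,k} = ∑_i (S_i - 1) (g_{j,k-i} - g_{j,k-i-1})` with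
  `S_i = ∑_{l ≤ i} u_{2l+m}`, by summation by parts and the sum rules `S_{K-1} = 1`
  (`gg_step`).
* The sum rules also make `U(z) = ∑ u_k z^k` divisible by `1 + z`, so that `v_k + v_{k-1} = 2 u_k`
  (`v_add`) and `2^j (g_{j,k} - g_{j,k-1}) = F_{j,k}` (`FF_eq`).
* `F` solves the refinement recursion with mask `v`, hence
  `F_{l+j,k} = ∑_i F_{l,i} g^(1)_{j,k-2^j i}` (`rec_comp`), which gives
  `max |F_{l+j}| ≤ 2^{j(1-α_j)} max |F_l|` (`FF_contract`).

With `B` and `D` the second and third factors of `C_j`, induction on `l` gives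
`|F_{l,k}| ≤ B 2^{(1-α)l}` for all `l`, so consecutive step functions differ by at most
`D B 2^{-αl}`; summing the geometric tail from `l = j` and passing to the limit yields the claim. -/

open Finset Filter Set

noncomputable section

/-- One step of the filter recursion: `u^(n+1)_k = 2 ∑_{i=0}^k (-1)^i u^(n)_{k-i}`
for `k ∈ {0, …, 2K-1}`, and `0` otherwise. -/
def unext (K : ℕ) (v : ℤ → ℝ) : ℤ → ℝ := fun k =>
  if 0 ≤ k ∧ k < 2 * (K : ℤ) then
    2 * ∑ i ∈ Finset.range (k.toNat + 1), (-1 : ℝ) ^ i * v (k - i)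
  else 0

/-- The filters `u^(n)`. -/
def uu (K : ℕ) (u0 : ℤ → ℝ) : ℕ → ℤ → ℝ
  | 0 => u0
  | n + 1 => unext K (uu K u0 n)

/-- The cascade arrays `g^(n)_{j,k}`. -/
def gg (K : ℕ) (u0 : ℤ → ℝ) (n : ℕ) : ℕ → ℤ → ℝ
  | 0 => fun k => if k = 0 then 1 else 0
  | j + 1 => fun k => ∑' i : ℤ, gg K u0 n j i * uu K u0 n (k - 2 * i)

/-- The differenced arrays `f^(n)_{j,k}`. -/
def ffd (K : ℕ) (u0 : ℤ → ℝ) (n : ℕ) (j : ℕ) (k : ℤ) : ℝ :=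
  ∑ i ∈ Finset.range (n + 1), (n.choose i : ℝ) * (-1 : ℝ) ^ i * gg K u0 n j (k - 2 ^ j * i)

/-- The step functions `f_j^{(n)}(x) = f^{(n)}_{j, ⌊2^j (x + K - 1)⌋}`. -/
def fstep (K : ℕ) (u0 : ℤ → ℝ) (n : ℕ) (j : ℕ) (x : ℝ) : ℝ :=
  ffd K u0 n j ⌊(2 : ℝ) ^ j * (x + K - 1)⌋

/-- `α_j^{(n)} = 1 - j⁻¹ log₂ ( max_{k=0}^{2^j-1} ∑_{i=0}^{2K-2} |g^{(n+1)}_{j, k + 2^j i}| )`. -/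
def alphaC (K : ℕ) (u0 : ℤ → ℝ) (j n : ℕ) : ℝ :=
  1 - (j : ℝ)⁻¹ * Real.logb 2 (sSup ((fun k : ℤ =>
    ∑ i ∈ Finset.range (2 * K - 1), |gg K u0 (n + 1) j (k + 2 ^ j * i)|) ''
      {k : ℤ | 0 ≤ k ∧ k < 2 ^ j}))

/-- `C_j^{(n)}`. -/
def CCj (K : ℕ) (u0 : ℤ → ℝ) (j n : ℕ) : ℝ :=
  (1 - (2 : ℝ) ^ (-(alphaC K u0 j n)))⁻¹ *
    sSup ((fun p : ℕ × ℤ => (2 : ℝ) ^ ((alphaC K u0 j n - 1) * p.1) * |ffd K u0 (n + 1) p.1 p.2|) ''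
      {p : ℕ × ℤ | p.1 < j ∧ 0 ≤ p.2 ∧ p.2 < 2 ^ p.1 * (2 * (K : ℤ) - 1)}) *
    max (∑ k ∈ Finset.range K, |∑ i ∈ Finset.range (k + 1), uu K u0 n (2 * i) - 1|)
        (∑ k ∈ Finset.range K, |∑ i ∈ Finset.range (k + 1), uu K u0 n (2 * i + 1) - 1|)

/-! ### The refinement operator -/

/-- The refinement (upsampled convolution) operator with mask `w`:
`(T_w a)_k = ∑_i a_i w_{k-2i}`. -/
def refineOp (w a : ℤ → ℝ) (k : ℤ) : ℝ := ∑' i : ℤ, a i * w (k - 2 * i)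

lemma refine_finite {w : ℤ → ℝ} {d : ℤ} (hw : ∀ k, w k ≠ 0 → 0 ≤ k ∧ k ≤ d) (a : ℤ → ℝ) (k c : ℤ)
    (hc : 0 < c) : (Function.support fun i : ℤ => a i * w (k - c * i)).Finite := by
  refine (Set.finite_Icc (-(|k| + |d|)) (|k| + |d|)).subset fun i hi => ?_
  have h := hw _ (right_ne_zero_of_mul hi)
  have h1 := le_abs_self k
  have h2 := neg_abs_le k
  have h3 := le_abs_self d
  have h4 := abs_nonneg d
  constructor
  · by_contra hlt
    push Not at hlt
    nlinarith
  · by_contra hlt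
    push Not at hlt
    nlinarith

lemma refine_summable {w : ℤ → ℝ} {d : ℤ} (hw : ∀ k, w k ≠ 0 → 0 ≤ k ∧ k ≤ d) (a : ℤ → ℝ)
    (k c : ℤ) (hc : 0 < c) : Summable fun i : ℤ => a i * w (k - c * i) :=
  summable_of_hasFiniteSupport (refine_finite hw a k c hc)

lemma refine_shift (w a : ℤ → ℝ) (c k : ℤ) :
    refineOp w (fun i => a (i - c)) k = refineOp w a (k - 2 * c) := by
  unfold refineOp
  rw [← (Equiv.addRight c).tsum_eq]
  refine tsum_congr fun i => ?_
  simp only [Equiv.coe_addRight, add_sub_cancel_right]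
  congr 2
  ring

lemma refine_sub {w : ℤ → ℝ} {d : ℤ} (hw : ∀ k, w k ≠ 0 → 0 ≤ k ∧ k ≤ d) (a b : ℤ → ℝ) (k : ℤ) :
    refineOp w (fun i => a i - b i) k = refineOp w a k - refineOp w b k := by
  unfold refineOp
  rw [← (refine_summable hw a k 2 two_pos).tsum_sub (refine_summable hw b k 2 two_pos)]
  exact tsum_congr fun i => sub_mul _ _ _

lemma gg_succ (K : ℕ) (u0 : ℤ → ℝ) (n j : ℕ) :
    gg K u0 n (j + 1) = refineOp (uu K u0 n) (gg K u0 n j) := rfl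

lemma gg_supp {K : ℕ} {u0 : ℤ → ℝ} {n : ℕ} {d : ℤ}
    (hw : ∀ k, uu K u0 n k ≠ 0 → 0 ≤ k ∧ k ≤ d) (j : ℕ) :
    ∀ k, gg K u0 n j k ≠ 0 → 0 ≤ k ∧ k ≤ (2 ^ j - 1) * d := by
  induction j with
  | zero =>
    intro k hk
    have : k = 0 := by
      by_contra h
      exact hk (by simp [gg, h])
    simp [this]
  | succ j ih =>
    intro k hk
    rw [gg_succ] at hk
    have : ∃ i, gg K u0 n j i * uu K u0 n (k - 2 * i) ≠ 0 := by
      by_contra! h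
      exact hk (by simp [refineOp, h])
    obtain ⟨i, hi⟩ := this
    have h1 := ih i (left_ne_zero_of_mul hi)
    have h2 := hw _ (right_ne_zero_of_mul hi)
    refine ⟨by linarith, ?_⟩
    rw [pow_succ]
    linarith

/-- Any solution `a` of the refinement recursion is transported over `j` levels by the
array `g_j`. -/
lemma rec_comp {K : ℕ} {u0 : ℤ → ℝ} {n : ℕ} {d : ℤ}
    (hw : ∀ k, uu K u0 n k ≠ 0 → 0 ≤ k ∧ k ≤ d) (a : ℕ → ℤ → ℝ)
    (ha : ∀ l, a (l + 1) = refineOp (uu K u0 n) (a l)) (l j : ℕ) (k : ℤ) :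
    a (l + j) k = ∑' i : ℤ, a l i * gg K u0 n j (k - 2 ^ j * i) := by
  induction j generalizing k with
  | zero =>
    rw [tsum_eq_single k]
    · simp [gg]
    · intro i hi
      have : ¬ (k - i = 0) := fun h => hi (by linarith)
      simp [gg, this]
  | succ j ih =>
    have hg := gg_supp hw j
    set w := uu K u0 n with hwdef
    -- For fixed `k` only finitely many outer indices contribute, whatever the array is.
    let s : Finset ℤ := (refine_finite hw (fun _ => 1) k 2 two_pos).toFinset
    have hs : ∀ i ∉ s, w (k - 2 * i) = 0 := by
      intro i hi
      simpa [s] using hi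
    rw [← add_assoc, ha, refineOp, tsum_eq_sum (s := s) (fun i hi => by rw [hs i hi, mul_zero])]
    simp_rw [ih, ← tsum_mul_right]
    rw [← Summable.tsum_finsetSum
      (fun i _ => (refine_summable hg (a l) i (2 ^ j) (by positivity)).mul_right _)]
    refine tsum_congr fun m => ?_
    have e : gg K u0 n (j + 1) (k - 2 ^ (j + 1) * m)
        = refineOp w (fun i => gg K u0 n j (i - 2 ^ j * m)) k := by
      rw [refine_shift, gg_succ]
      congr 1
      ring
    rw [e, refineOp, tsum_eq_sum (s := s) (fun i hi => by rw [hs i hi, mul_zero]), Finset.mul_sum]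
    exact Finset.sum_congr rfl fun i _ => by ring

/-! ### The mask `u^(1)` and the differenced arrays -/

lemma alt_sum (u : ℤ → ℝ) (N : ℕ) :
    ∑ i ∈ Finset.range (2 * N), (-1 : ℝ) ^ i * u (2 * N - 1 - i)
      = ∑ i ∈ Finset.range N, u (2 * i + 1) - ∑ i ∈ Finset.range N, u (2 * i) := by
  induction N with
  | zero => simp
  | succ N ih =>
    rw [show 2 * (N + 1) = 2 * N + 1 + 1 by ring, Finset.sum_range_succ', Finset.sum_range_succ',
      Finset.sum_range_succ (fun i : ℕ => u (2 * (i : ℤ) + 1)),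
      Finset.sum_range_succ (fun i : ℕ => u (2 * (i : ℤ)))]
    have : ∑ i ∈ Finset.range (2 * N), (-1 : ℝ) ^ (i + 1 + 1) *
        u (2 * ((N + 1 : ℕ) : ℤ) - 1 - ((i + 1 + 1 : ℕ) : ℤ))
        = ∑ i ∈ Finset.range (2 * N), (-1 : ℝ) ^ i * u (2 * N - 1 - i) := by
      refine Finset.sum_congr rfl fun i _ => ?_
      rw [pow_succ, pow_succ]
      have : 2 * ((N + 1 : ℕ) : ℤ) - 1 - ((i + 1 + 1 : ℕ) : ℤ) = 2 * N - 1 - i := by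
        push_cast; ring
      rw [this]
      ring
    rw [this, ih]
    have e1 : 2 * ((N + 1 : ℕ) : ℤ) - 1 - ((0 + 1 : ℕ) : ℤ) = 2 * N := by push_cast; ring
    have e2 : 2 * ((N + 1 : ℕ) : ℤ) - 1 - ((0 : ℕ) : ℤ) = 2 * N + 1 := by push_cast; ring
    rw [e1, e2]
    ring

section
variable {K : ℕ} {u0 : ℤ → ℝ}

/-- The top coefficient of `u^(1)` vanishes: it is twice the difference of the two sum rules. -/
lemma v_last (hodd : ∑ i ∈ Finset.range K, u0 (2 * i + 1) = 1)
    (heven : ∑ i ∈ Finset.range K, u0 (2 * i) = 1) : uu K u0 1 (2 * K - 1) = 0 := by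
  simp only [uu, unext]
  split_ifs with h
  · rw [show (2 * (K : ℤ) - 1).toNat + 1 = 2 * K by omega, alt_sum, hodd, heven]
    simp
  · rfl

lemma v_supp (hodd : ∑ i ∈ Finset.range K, u0 (2 * i + 1) = 1)
    (heven : ∑ i ∈ Finset.range K, u0 (2 * i) = 1) :
    ∀ k, uu K u0 1 k ≠ 0 → 0 ≤ k ∧ k ≤ 2 * K - 2 := by
  intro k hk
  have h1 : k ≠ 2 * K - 1 := fun h => hk (h ▸ v_last hodd heven)
  have h2 : 0 ≤ k ∧ k < 2 * (K : ℤ) := by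
    by_contra h
    exact hk (by simp only [uu, unext, if_neg h])
  omega

lemma u_supp (hsupp : ∀ k : ℤ, k < 0 ∨ 2 * (K : ℤ) ≤ k → u0 k = 0) :
    ∀ k, uu K u0 0 k ≠ 0 → 0 ≤ k ∧ k ≤ 2 * K - 1 := by
  intro k hk
  by_contra h
  exact hk (hsupp k (by omega))

/-- `(1 + z) V(z) = 2 U(z)`, read off on coefficients. -/
lemma v_add (hsupp : ∀ k : ℤ, k < 0 ∨ 2 * (K : ℤ) ≤ k → u0 k = 0)
    (hodd : ∑ i ∈ Finset.range K, u0 (2 * i + 1) = 1)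
    (heven : ∑ i ∈ Finset.range K, u0 (2 * i) = 1) (k : ℤ) :
    uu K u0 1 k + uu K u0 1 (k - 1) = 2 * u0 k := by
  have hz : ∀ m : ℤ, ¬ (0 ≤ m ∧ m ≤ 2 * (K : ℤ) - 2) → uu K u0 1 m = 0 := fun m hm => by
    by_contra h
    exact hm (v_supp hodd heven m h)
  by_cases h0 : k < 0
  · rw [hz k (by omega), hz (k - 1) (by omega), hsupp k (Or.inl h0)]; simp
  by_cases h1 : 2 * (K : ℤ) ≤ k
  · rw [hz k (by omega), hz (k - 1) (by omega), hsupp k (Or.inr h1)]; simp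
  rcases eq_or_ne k 0 with rfl | hk
  · rw [hz (0 - 1) (by omega)]
    simp only [uu, unext]
    rw [if_pos (by omega)]
    simp
  · simp only [uu, unext]
    rw [if_pos (by omega), if_pos (by omega), show k.toNat = (k - 1).toNat + 1 by omega,
      Finset.sum_range_succ']
    have : ∑ i ∈ Finset.range ((k - 1).toNat + 1), (-1 : ℝ) ^ (i + 1) * u0 (k - ((i + 1 : ℕ) : ℤ))
        = - ∑ i ∈ Finset.range ((k - 1).toNat + 1), (-1 : ℝ) ^ i * u0 (k - 1 - i) := by
      rw [← Finset.sum_neg_distrib]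
      refine Finset.sum_congr rfl fun i _ => ?_
      rw [show k - ((i + 1 : ℕ) : ℤ) = k - 1 - i by push_cast; ring, pow_succ]
      ring
    rw [this]
    simp only [pow_zero, one_mul, Nat.cast_zero, sub_zero]
    ring

lemma ffd_zero (j : ℕ) (k : ℤ) : ffd K u0 0 j k = gg K u0 0 j k := by simp [ffd]

lemma ffd_one (j : ℕ) (k : ℤ) :
    ffd K u0 1 j k = gg K u0 1 j k - gg K u0 1 j (k - 2 ^ j) := by
  simp [ffd, Finset.sum_range_succ, sub_eq_add_neg]

lemma FF_succ {d : ℤ} (hv : ∀ k, uu K u0 1 k ≠ 0 → 0 ≤ k ∧ k ≤ d) (l : ℕ) :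
    ffd K u0 1 (l + 1) = refineOp (uu K u0 1) (ffd K u0 1 l) := by
  ext k
  rw [ffd_one, gg_succ, pow_succ', ← refine_shift, ← refine_sub hv]
  congr 1
  ext i
  rw [ffd_one]

/-- The arrays `f^(1)_j` are the difference quotients of the arrays `g^(0)_j`. -/
lemma FF_eq (hsupp : ∀ k : ℤ, k < 0 ∨ 2 * (K : ℤ) ≤ k → u0 k = 0)
    (hodd : ∑ i ∈ Finset.range K, u0 (2 * i + 1) = 1)
    (heven : ∑ i ∈ Finset.range K, u0 (2 * i) = 1) (j : ℕ) (k : ℤ) :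
    ffd K u0 1 j k = 2 ^ j * (gg K u0 0 j k - gg K u0 0 j (k - 1)) := by
  have hv := v_supp hodd heven
  have hu := u_supp hsupp
  induction j generalizing k with
  | zero => rw [ffd_one]; simp [gg]
  | succ j ih =>
    rw [FF_succ hv]
    have e : ffd K u0 1 j
        = fun i => 2 ^ j * gg K u0 0 j i - (fun i => 2 ^ j * gg K u0 0 j i) (i - 1) := by
      ext i
      rw [ih]
      ring
    rw [e, refine_sub hv (fun i => 2 ^ j * gg K u0 0 j i)
      (fun i => (fun i => 2 ^ j * gg K u0 0 j i) (i - 1)),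
      refine_shift _ (fun i => 2 ^ j * gg K u0 0 j i), gg_succ]
    unfold refineOp
    rw [← (refine_summable hv _ k 2 two_pos).tsum_sub (refine_summable hv _ _ 2 two_pos),
      ← (refine_summable hu _ k 2 two_pos).tsum_sub (refine_summable hu _ _ 2 two_pos),
      ← tsum_mul_left]
    refine tsum_congr fun i => ?_
    have h1 := v_add hsupp hodd heven (k - 2 * i)
    have h2 := v_add hsupp hodd heven (k - 2 * i - 1)
    have e1 : k - 2 * 1 - 2 * i = k - 2 * i - 1 - 1 := by ring
    have e2 : k - 1 - 2 * i = k - 2 * i - 1 := by ring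
    have e3 : uu K u0 0 = u0 := rfl
    rw [e1, e2, e3]
    linear_combination 2 ^ j * gg K u0 0 j i * (h1 - h2)

/-! ### One refinement step -/

lemma sum_by_parts (c b : ℕ → ℝ) (N : ℕ) :
    ∑ i ∈ Finset.range N, c i * b i
      = ∑ i ∈ Finset.range N, (∑ l ∈ Finset.range (i + 1), c l - 1) * (b i - b (i + 1))
        + b 0 + (∑ l ∈ Finset.range N, c l - 1) * b N := by
  induction N with
  | zero => simp
  | succ N ih =>
    rw [Finset.sum_range_succ, ih, Finset.sum_range_succ (fun i => (_ : ℝ) * (b i - b (i + 1))),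
      Finset.sum_range_succ c N]
    ring

lemma gg_refine (hsupp : ∀ k : ℤ, k < 0 ∨ 2 * (K : ℤ) ≤ k → u0 k = 0) (j : ℕ) (k m : ℤ)
    (hm : m = 0 ∨ m = 1) :
    gg K u0 0 (j + 1) (2 * k + m)
      = ∑ i ∈ Finset.range K, u0 (2 * i + m) * gg K u0 0 j (k - i) := by
  rw [gg_succ, refineOp, ← (Equiv.subLeft k).tsum_eq,
    tsum_eq_sum (s := (Finset.range K).map Nat.castEmbedding), Finset.sum_map]
  · refine Finset.sum_congr rfl fun i _ => ?_
    have : 2 * k + m - 2 * (k - i) = 2 * i + m := by ring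
    simp only [Nat.castEmbedding_apply, Equiv.subLeft_apply, this, uu]
    exact mul_comm _ _
  · intro i hi
    have hi' : i < 0 ∨ (K : ℤ) ≤ i := by
      by_contra! h
      refine hi (Finset.mem_map.2 ⟨i.toNat, Finset.mem_range.2 (by omega), ?_⟩)
      simp [h.1]
    have : u0 (2 * k + m - 2 * (k - i)) = 0 := hsupp _ (by omega)
    simp [uu, this]

lemma gg_step (hsupp : ∀ k : ℤ, k < 0 ∨ 2 * (K : ℤ) ≤ k → u0 k = 0) (j : ℕ) (k m : ℤ)
    (hm : m = 0 ∨ m = 1) (hsum : ∑ i ∈ Finset.range K, u0 (2 * i + m) = 1) (E : ℝ)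
    (hE : ∀ i, |gg K u0 0 j i - gg K u0 0 j (i - 1)| ≤ E) :
    |gg K u0 0 (j + 1) (2 * k + m) - gg K u0 0 j k|
      ≤ (∑ i ∈ Finset.range K, |∑ l ∈ Finset.range (i + 1), u0 (2 * l + m) - 1|) * E := by
  rw [gg_refine hsupp j k m hm, sum_by_parts (fun i => u0 (2 * i + m))
    (fun i => gg K u0 0 j (k - i)), hsum, Finset.sum_mul]
  simp only [sub_self, zero_mul, add_zero, Nat.cast_zero, sub_zero, add_sub_cancel_right]
  refine (Finset.abs_sum_le_sum_abs _ _).trans (Finset.sum_le_sum fun i _ => ?_)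
  rw [abs_mul]
  refine mul_le_mul_of_nonneg_left ?_ (abs_nonneg _)
  have := hE (k - i)
  rwa [show k - (i : ℤ) - 1 = k - ((i + 1 : ℕ) : ℤ) by push_cast; ring] at this

/-! ### Growth of the differenced arrays -/

/-- The column sums of `g^(1)_j` bound the growth of `f^(1)` over `j` levels. -/
lemma FF_contract (hK : 1 ≤ K) (hodd : ∑ i ∈ Finset.range K, u0 (2 * i + 1) = 1)
    (heven : ∑ i ∈ Finset.range K, u0 (2 * i) = 1) (l j : ℕ) (M R : ℝ) (hM0 : 0 ≤ M)
    (hM : ∀ k, |ffd K u0 1 l k| ≤ M)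
    (hR : ∀ r : ℤ, 0 ≤ r → r < 2 ^ j →
      ∑ i ∈ Finset.range (2 * K - 1), |gg K u0 1 j (r + 2 ^ j * i)| ≤ R) (k : ℤ) :
    |ffd K u0 1 (l + j) k| ≤ M * R := by
  have hv := v_supp hodd heven
  rw [rec_comp hv (ffd K u0 1) (FF_succ hv) l j k]
  have hp : (0 : ℤ) < 2 ^ j := by positivity
  set q := k / 2 ^ j
  set r := k % 2 ^ j
  have hk : k = r + 2 ^ j * q := (Int.emod_add_mul_ediv k (2 ^ j)).symm
  have hr0 : 0 ≤ r := Int.emod_nonneg _ hp.ne'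
  have hr1 : r < 2 ^ j := Int.emod_lt_of_pos _ hp
  rw [← (Equiv.subLeft q).tsum_eq,
    tsum_eq_sum (s := (Finset.range (2 * K - 1)).map Nat.castEmbedding), Finset.sum_map]
  · refine (Finset.abs_sum_le_sum_abs _ _).trans (le_trans ?_
      (mul_le_mul_of_nonneg_left (hR r hr0 hr1) hM0))
    rw [Finset.mul_sum]
    refine Finset.sum_le_sum fun i _ => ?_
    have e : k - 2 ^ j * (q - i) = r + 2 ^ j * i := by rw [hk]; ring
    rw [abs_mul]
    simp only [Nat.castEmbedding_apply, Equiv.subLeft_apply, e]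
    exact mul_le_mul_of_nonneg_right (hM _) (abs_nonneg _)
  · intro i hi
    have e : k - 2 ^ j * (q - i) = r + 2 ^ j * i := by rw [hk]; ring
    simp only [Equiv.subLeft_apply, e]
    by_contra hne
    have h := gg_supp hv j _ (right_ne_zero_of_mul hne)
    have hK' : (1 : ℤ) ≤ K := by exact_mod_cast hK
    have h1 : 0 ≤ i := by
      by_contra! hlt
      nlinarith
    have h2 : i ≤ 2 * K - 2 := by
      by_contra! hlt
      nlinarith
    refine hi (Finset.mem_map.2 ⟨i.toNat, Finset.mem_range.2 (by omega), ?_⟩)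
    simp [h1]

/-- A bound for `f^(1)_l` on the index window `[0, 2^l (2K-1))` holds everywhere. For `K = 1` the
support sticks out of the window at `k = 2^l`, where the absolute value is that at `k = 0`. -/
lemma FF_window (hK : 1 ≤ K) (hodd : ∑ i ∈ Finset.range K, u0 (2 * i + 1) = 1)
    (heven : ∑ i ∈ Finset.range K, u0 (2 * i) = 1) (l : ℕ) (M : ℝ)
    (hM : ∀ k : ℤ, 0 ≤ k → k < 2 ^ l * (2 * (K : ℤ) - 1) → |ffd K u0 1 l k| ≤ M) (k : ℤ) :
    |ffd K u0 1 l k| ≤ M := by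
  have hv := v_supp hodd heven
  have hp : (1 : ℤ) ≤ 2 ^ l := one_le_pow₀ (by norm_num)
  have hK' : (1 : ℤ) ≤ K := by exact_mod_cast hK
  have hg := gg_supp hv l
  have hM0 := hM 0 le_rfl (by nlinarith)
  by_cases hin : 0 ≤ k ∧ k < 2 ^ l * (2 * (K : ℤ) - 1)
  · exact hM k hin.1 hin.2
  have hg1 : gg K u0 1 l k = 0 := by
    by_contra h
    have := hg k h
    exact hin ⟨this.1, by nlinarith⟩
  by_cases hg2 : gg K u0 1 l (k - 2 ^ l) = 0
  · rw [ffd_one, hg1, hg2, sub_zero, abs_zero]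
    exact (abs_nonneg _).trans hM0
  · have h := hg _ hg2
    have hk1 : 2 ^ l * (2 * (K : ℤ) - 1) ≤ k := by
      by_contra! hlt
      exact hin ⟨by linarith, hlt⟩
    have hK1 : (K : ℤ) = 1 := by nlinarith
    have hk2 : k = 2 ^ l := by rw [hK1] at h; linarith
    have hneg : gg K u0 1 l (0 - 2 ^ l) = 0 := by
      by_contra h'
      have := hg _ h'
      linarith
    rw [ffd_one, hneg, sub_zero] at hM0
    rw [ffd_one, hg1, hk2, sub_self, zero_sub, abs_neg]
    exact hM0

end

/-- If `α_{j*}^{(0)} > 0` for some `j* ≥ 1`, so that the `f_j^{(0)}`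
converge in `L^∞([1-K,K))` to a limit `f`, then for every `j ≥ 1` with `α_j^{(0)} > 0`,
`sup_{x ∈ [1-K,K)} |f_j^{(0)}(x) - f(x)| ≤ C_j^{(0)} 2^{-j α_j^{(0)}}`. -/
theorem stmt1 (K : ℕ) (hK : 1 ≤ K) (u0 : ℤ → ℝ)
    (hsupp : ∀ k : ℤ, k < 0 ∨ 2 * (K : ℤ) ≤ k → u0 k = 0)
    (hodd : ∑ i ∈ Finset.range K, u0 (2 * i + 1) = 1)
    (heven : ∑ i ∈ Finset.range K, u0 (2 * i) = 1)
    (jstar : ℕ) (hjstar : 1 ≤ jstar) (halpha : 0 < alphaC K u0 jstar 0)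
    (f : ℝ → ℝ)
    (hf : TendstoUniformlyOn (fun j : ℕ => fstep K u0 0 j) f atTop
      (Set.Ico (1 - (K : ℝ)) K)) :
    ∀ j : ℕ, 1 ≤ j → 0 < alphaC K u0 j 0 →
      ∀ x ∈ Set.Ico (1 - (K : ℝ)) K,
        |fstep K u0 0 j x - f x| ≤ CCj K u0 j 0 * (2 : ℝ) ^ (-(j : ℝ) * alphaC K u0 j 0) := by
  intro j hj hα x hx
  set α := alphaC K u0 j 0 with hαdef
  set ρ : ℝ := (2 : ℝ) ^ (1 - α) with hρ
  set q : ℝ := (2 : ℝ) ^ (-α) with hq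
  have hρ0 : 0 < ρ := by positivity
  have hq0 : 0 < q := by positivity
  have hq1 : q < 1 := Real.rpow_lt_one_of_one_lt_of_neg (by norm_num) (by linarith)
  have hρq : ρ = 2 * q := by
    rw [hρ, hq, sub_eq_add_neg, Real.rpow_add two_pos, Real.rpow_one]
  have hj0 : (j : ℝ) ≠ 0 := by positivity
  -- If the maximum is `0` the junk value `logb 2 0 = 0` still gives an upper bound.
  have hR : ∀ r : ℤ, 0 ≤ r → r < 2 ^ j →
      ∑ i ∈ Finset.range (2 * K - 1), |gg K u0 1 j (r + 2 ^ j * i)| ≤ ρ ^ j := by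
    set S : Set ℝ := (fun k : ℤ =>
      ∑ i ∈ Finset.range (2 * K - 1), |gg K u0 (0 + 1) j (k + 2 ^ j * i)|) ''
      {k : ℤ | 0 ≤ k ∧ k < 2 ^ j} with hS
    have hbdd : BddAbove S := (((Set.finite_Ico (0 : ℤ) (2 ^ j))).image _).bddAbove
    have hle : sSup S ≤ ρ ^ j := by
      by_cases hpos : 0 < sSup S
      · have e : α = 1 - (j : ℝ)⁻¹ * Real.logb 2 (sSup S) := rfl
        have e2 : (1 - α) * (j : ℝ) = Real.logb 2 (sSup S) := by
          rw [e]
          field_simp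
          ring
        rw [hρ, ← Real.rpow_natCast, ← Real.rpow_mul two_pos.le, e2,
          Real.rpow_logb two_pos (by norm_num) hpos]
      · exact (not_lt.1 hpos).trans (by positivity)
    intro r h0 h1
    exact (le_csSup hbdd ⟨r, ⟨h0, h1⟩, rfl⟩).trans hle
  unfold CCj
  rw [← hαdef, ← hq]
  set T : Set ℝ := (fun p : ℕ × ℤ => (2 : ℝ) ^ ((α - 1) * p.1) * |ffd K u0 (0 + 1) p.1 p.2|) ''
      {p : ℕ × ℤ | p.1 < j ∧ 0 ≤ p.2 ∧ p.2 < 2 ^ p.1 * (2 * (K : ℤ) - 1)} with hT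
  set B := sSup T with hB
  set D := max (∑ k ∈ Finset.range K, |∑ i ∈ Finset.range (k + 1), uu K u0 0 (2 * i) - 1|)
        (∑ k ∈ Finset.range K, |∑ i ∈ Finset.range (k + 1), uu K u0 0 (2 * i + 1) - 1|) with hD
  have hTb : BddAbove T := by
    have hfin : {p : ℕ × ℤ | p.1 < j ∧ 0 ≤ p.2 ∧ p.2 < 2 ^ p.1 * (2 * (K : ℤ) - 1)}.Finite := by
      refine ((Set.finite_Iio j).prod
        (Set.finite_Ico (0 : ℤ) (2 ^ j * (2 * (K : ℤ) - 1)))).subset ?_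
      rintro ⟨l, k⟩ ⟨h1, h2, h3⟩
      refine ⟨h1, h2, lt_of_lt_of_le h3 ?_⟩
      have : (1 : ℤ) ≤ K := by exact_mod_cast hK
      exact mul_le_mul_of_nonneg_right (pow_le_pow_right₀ (by norm_num) h1.le) (by linarith)
    exact (hfin.image _).bddAbove
  have hB0 : 0 ≤ B := by
    refine Real.sSup_nonneg ?_
    rintro _ ⟨p, -, rfl⟩
    positivity
  have hρl : ∀ l : ℕ, (2 : ℝ) ^ ((α - 1) * (l : ℝ)) * ρ ^ l = 1 := by
    intro l
    rw [hρ, ← Real.rpow_natCast, ← Real.rpow_mul two_pos.le, ← Real.rpow_add two_pos]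
    rw [show (α - 1) * (l : ℝ) + (1 - α) * l = 0 by ring, Real.rpow_zero]
  have hF : ∀ l : ℕ, ∀ k, |ffd K u0 1 l k| ≤ B * ρ ^ l := by
    intro l
    induction l using Nat.strong_induction_on with
    | _ l ih =>
      by_cases hl : l < j
      · refine FF_window hK hodd heven l _ fun k h0 h1 => ?_
        have h := le_csSup hTb ⟨(l, k), ⟨hl, h0, h1⟩, rfl⟩
        have h2 := mul_le_mul_of_nonneg_right h (pow_pos hρ0 l).le
        calc |ffd K u0 1 l k|
            = (2 : ℝ) ^ ((α - 1) * (l : ℝ)) * ρ ^ l * |ffd K u0 1 l k| := by rw [hρl, one_mul]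
          _ = (2 : ℝ) ^ ((α - 1) * (l : ℝ)) * |ffd K u0 1 l k| * ρ ^ l := by ring
          _ ≤ B * ρ ^ l := h2
      · intro k
        obtain ⟨m, rfl⟩ := Nat.exists_eq_add_of_le' (not_lt.1 hl)
        have h := FF_contract hK hodd heven m j (B * ρ ^ m) (ρ ^ j) (by positivity)
          (ih m (by omega)) hR k
        rwa [mul_assoc, ← pow_add] at h
  have hG : ∀ (l : ℕ) (i : ℤ), |gg K u0 0 l i - gg K u0 0 l (i - 1)| ≤ B * q ^ l := by
    intro l i
    have h := hF l i
    rw [FF_eq hsupp hodd heven, hρq, mul_pow, abs_mul, abs_of_pos (by positivity : (0:ℝ) < 2 ^ l)]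
      at h
    refine le_of_mul_le_mul_left (h.trans_eq ?_) (by positivity : (0:ℝ) < 2 ^ l)
    ring
  have hstep : ∀ l : ℕ, |fstep K u0 0 l x - fstep K u0 0 (l + 1) x| ≤ D * (B * q ^ l) := by
    intro l
    unfold fstep
    rw [ffd_zero, ffd_zero, abs_sub_comm]
    set y := (2 : ℝ) ^ l * (x + K - 1) with hy
    rw [show (2 : ℝ) ^ (l + 1) * (x + K - 1) = 2 * y by rw [hy]; ring]
    have hBq : 0 ≤ B * q ^ l := by positivity
    have hf1 := Int.floor_le y
    have hf2 := Int.lt_floor_add_one y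
    have hc : ⌊2 * y⌋ = 2 * ⌊y⌋ + 0 ∨ ⌊2 * y⌋ = 2 * ⌊y⌋ + 1 := by
      have h1 : 2 * ⌊y⌋ ≤ ⌊2 * y⌋ := Int.le_floor.2 (by push_cast; linarith)
      have h2 : ⌊2 * y⌋ < 2 * ⌊y⌋ + 2 := Int.floor_lt.2 (by push_cast; linarith)
      omega
    rcases hc with hc | hc
    · rw [hc]
      refine (gg_step hsupp l _ 0 (Or.inl rfl) (by simpa using heven) _ (hG l)).trans ?_
      refine mul_le_mul_of_nonneg_right ?_ hBq
      simp only [add_zero]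
      exact le_max_left _ _
    · rw [hc]
      refine (gg_step hsupp l _ 1 (Or.inr rfl) hodd _ (hG l)).trans ?_
      exact mul_le_mul_of_nonneg_right (le_max_right _ _) hBq
  have hD0 : 0 ≤ D := le_max_of_le_left (Finset.sum_nonneg fun _ _ => abs_nonneg _)
  have h1q : 0 < 1 - q := by linarith
  have htel : ∀ N : ℕ, |fstep K u0 0 j x - fstep K u0 0 (j + N) x|
      ≤ (1 - q)⁻¹ * B * D * (q ^ j - q ^ (j + N)) := by
    intro N
    induction N with
    | zero => simp
    | succ N ih =>
      refine (abs_sub_le _ (fstep K u0 0 (j + N) x) _).trans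
        ((add_le_add ih (hstep (j + N))).trans_eq ?_)
      rw [← add_assoc, pow_succ q (j + N)]
      field_simp
      ring
  have hqj : (2 : ℝ) ^ (-(j : ℝ) * α) = q ^ j := by
    rw [hq, ← Real.rpow_natCast, ← Real.rpow_mul two_pos.le]
    congr 1
    ring
  rw [hqj]
  have hlim : Tendsto (fun N : ℕ => |fstep K u0 0 j x - fstep K u0 0 (j + N) x|) atTop
      (nhds |fstep K u0 0 j x - f x|) := by
    have h := (hf.tendsto_at hx).comp (tendsto_add_atTop_nat j)
    have h' : Tendsto (fun N : ℕ => fstep K u0 0 (j + N) x) atTop (nhds (f x)) := by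
      refine h.congr fun N => ?_
      simp [add_comm]
    exact (tendsto_const_nhds.sub h').abs
  refine le_of_tendsto' hlim fun N => (htel N).trans ?_
  refine mul_le_mul_of_nonneg_left ?_ (by positivity)
  linarith [pow_pos hq0 (j + N)]
end
end

section
/- Fix integers j ≥ 0, n ≥ 0 and a ≤ b, and set I := 2^{−j}[a, b+1) + ℤ and, for l ≥ j, J(l) := [⌊2^{l−j} a⌋ − 2K + 2, ⌊2^{l−j} b⌋] + 2^l ℤ (a set of integers taken modulo shifts by 2^l). Then on I ∩ [1−K, K), for every l ≥ j, the values of f_l^{(n)} depend on the values g_{j,k}^{(n)} only for k ∈ J(j): if (h_{j,k})_k is any family of reals with h_{j,k} = g_{j,k}^{(n)} for all k ∈ J(j), and one defines h_{m+1,k} := Σ_{i∈ℤ} h_{m,i} u_{k−2i}^{(n)} for m ≥ j, f̃_{l,k} := Σ_{i=0}^{n} binom(n,i)(−1)^i h_{l, k−2^l i}, and f̃_l(x) := f̃_{l, ⌊2^l(x+K−1)⌋}, then f̃_l(x) = f_l^{(n)}(x) for all x ∈ I ∩ [1−K, K) and all l ≥ j. -/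
/-!
The support of `u^(n)` is contained in `{0, …, 2K-1}`, so the entry at `k` of level `m + 1` of a
cascade involves only the entries `i` of level `m` with `k - 2K + 1 ≤ 2i ≤ k`. Modulo shifts by
`2^m`, the integer interval `[2^{m-j} a - 2K + 2, 2^{m-j} (b+1) - 1]` is therefore sufficient to
compute the interval obtained from it by `m ↦ m + 1`, and for `m = j` it is exactly `J(j)`. Hence
`h` and `g^(n)` agree on these intervals at all levels `l ≥ j` (`cascade_agree`).
For `x ∈ I`, say `x - t ∈ 2^{-j} [a, b+1)` with `t ∈ ℤ`, every index `⌊2^l (x + K - 1)⌋ - 2^l i` is congruent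
modulo `2^l` to `⌊2^l (x - t)⌋`, which lies in `[2^{l-j} a, 2^{l-j} (b+1) - 1]`, so the two
differenced sums agree term by term. For `l > j` these indices need not all lie in
`J(l)`, which is why `cascade_agree` works with the longer intervals.
-/

open Finset Filter Set

noncomputable section

/-- The set `I = 2^{-j}[a, b+1) + ℤ`. -/
def Iset (j : ℕ) (a b : ℤ) : Set ℝ :=
  {x : ℝ | ∃ m : ℤ, (2 : ℝ) ^ (-(j : ℤ)) * a ≤ x - m ∧ x - m < (2 : ℝ) ^ (-(j : ℤ)) * (b + 1)}

/-- The set `J(l) = [⌊2^{l-j} a⌋ - 2K + 2, ⌊2^{l-j} b⌋] + 2^l ℤ`. -/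
def Jset (K j : ℕ) (a b : ℤ) (l : ℕ) : Set ℤ :=
  {k : ℤ | ∃ m : ℤ,
    ⌊(2 : ℝ) ^ ((l : ℤ) - (j : ℤ)) * a⌋ - 2 * (K : ℤ) + 2 ≤ k - 2 ^ l * m ∧
    k - 2 ^ l * m ≤ ⌊(2 : ℝ) ^ ((l : ℤ) - (j : ℤ)) * b⌋}

/-- The filters `u^(n)` are supported in `{0, …, 2K-1}`. -/
lemma uu_eq_zero (K : ℕ) (u0 : ℤ → ℝ)
    (hsupp : ∀ k : ℤ, k < 0 ∨ 2 * (K : ℤ) ≤ k → u0 k = 0) (n : ℕ) (k : ℤ)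
    (hk : k < 0 ∨ 2 * (K : ℤ) ≤ k) : uu K u0 n k = 0 := by
  cases n with
  | zero => exact hsupp k hk
  | succ n =>
    simp only [uu, unext]
    rw [if_neg (by omega)]

/-- Propagation of the agreement of two cascades, `d` levels above level `j`. The right end
`2^d (b + 1) - 1` of the range of agreement exceeds the right end `2^d b` of `J(j + d)` unless
`d = 0`, where the two coincide. -/
lemma cascade_agree (K : ℕ) (u : ℤ → ℝ)
    (hu : ∀ k : ℤ, k < 0 ∨ 2 * (K : ℤ) ≤ k → u k = 0)
    (j : ℕ) (a b : ℤ) (g h : ℕ → ℤ → ℝ)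
    (init : ∀ k m : ℤ, a - 2 * K + 2 ≤ k - 2 ^ j * m → k - 2 ^ j * m ≤ b → h j k = g j k)
    (h_rec : ∀ m : ℕ, j ≤ m → ∀ k : ℤ, h (m + 1) k = ∑' i : ℤ, h m i * u (k - 2 * i))
    (g_rec : ∀ m : ℕ, j ≤ m → ∀ k : ℤ, g (m + 1) k = ∑' i : ℤ, g m i * u (k - 2 * i))
    (d : ℕ) : ∀ k m : ℤ, 2 ^ d * a - 2 * K + 2 ≤ k - 2 ^ (j + d) * m →
      k - 2 ^ (j + d) * m ≤ 2 ^ d * (b + 1) - 1 → h (j + d) k = g (j + d) k := by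
  induction d with
  | zero =>
    intro k m h1 h2
    simp only [pow_zero, one_mul, add_zero] at h1 h2 ⊢
    exact init k m h1 (by linarith)
  | succ d ih =>
    intro k m h1 h2
    rw [← add_assoc, h_rec _ (by omega), g_rec _ (by omega)]
    refine tsum_congr fun i => ?_
    by_cases hi : k - 2 * i < 0 ∨ 2 * (K : ℤ) ≤ k - 2 * i
    · rw [hu _ hi, mul_zero, mul_zero]
    · push Not at hi
      have e1 : (2 : ℤ) ^ (j + (d + 1)) * m = 2 * (2 ^ (j + d) * m) := by ring
      have e2 : (2 : ℤ) ^ (d + 1) * a = 2 * (2 ^ d * a) := by ring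
      have e3 : (2 : ℤ) ^ (d + 1) * (b + 1) = 2 * (2 ^ d * (b + 1)) := by ring
      rw [e1, e2] at h1
      rw [e1, e3] at h2
      rw [ih i m (by omega) (by omega)]

/-- On `I ∩ [1-K, K)`, for every `l ≥ j`, the values of `f_l^{(n)}` depend on
the `g^{(n)}_{j,k}` only through `k ∈ J(j)`: any family `h` agreeing with `g^{(n)}_{j,·}` on
`J(j)` and propagated by the same recursion produces the same step functions on `I ∩ [1-K,K)`. -/
theorem stmt3 (K : ℕ) (hK : 1 ≤ K) (u0 : ℤ → ℝ)
    (hsupp : ∀ k : ℤ, k < 0 ∨ 2 * (K : ℤ) ≤ k → u0 k = 0)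
    (hodd : ∑ i ∈ Finset.range K, u0 (2 * i + 1) = 1)
    (heven : ∑ i ∈ Finset.range K, u0 (2 * i) = 1)
    (j n : ℕ) (a b : ℤ) (hab : a ≤ b)
    (h : ℕ → ℤ → ℝ)
    (h_init : ∀ k ∈ Jset K j a b j, h j k = gg K u0 n j k)
    (h_rec : ∀ m : ℕ, j ≤ m → ∀ k : ℤ,
      h (m + 1) k = ∑' i : ℤ, h m i * uu K u0 n (k - 2 * i)) :
    ∀ l : ℕ, j ≤ l → ∀ x ∈ Iset j a b ∩ Set.Ico (1 - (K : ℝ)) K,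
      (∑ i ∈ Finset.range (n + 1), (n.choose i : ℝ) * (-1 : ℝ) ^ i *
          h l (⌊(2 : ℝ) ^ l * (x + K - 1)⌋ - 2 ^ l * i)) = fstep K u0 n l x := by
  intro l hl x hx
  obtain ⟨⟨m, hm1, hm2⟩, -⟩ := hx
  obtain ⟨d, rfl⟩ := Nat.exists_eq_add_of_le hl
  have agree := cascade_agree K (uu K u0 n) (uu_eq_zero K u0 hsupp n) j a b (gg K u0 n) h
    (fun k m h1 h2 => h_init k ⟨m, by simpa using h1, by simpa using h2⟩) h_rec
    (fun _ _ _ => rfl) d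
  unfold fstep ffd
  refine Finset.sum_congr rfl fun i _ => ?_
  congr 1
  have hpj : (0 : ℝ) < 2 ^ (j + d) := by positivity
  have hscale : (2 : ℝ) ^ (j + d) * 2 ^ (-(j : ℤ)) = 2 ^ d := by
    rw [zpow_neg, zpow_natCast, pow_add]
    field_simp
  have hfloor : ⌊(2 : ℝ) ^ (j + d) * (x + K - 1)⌋
      = ⌊(2 : ℝ) ^ (j + d) * (x - m)⌋ + 2 ^ (j + d) * (m + K - 1) := by
    rw [← Int.floor_add_intCast]
    congr 1
    push_cast
    ring
  have hlow : 2 ^ d * a ≤ ⌊(2 : ℝ) ^ (j + d) * (x - m)⌋ := by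
    rw [Int.le_floor]
    have := mul_le_mul_of_nonneg_left hm1 hpj.le
    rw [← mul_assoc, hscale] at this
    exact_mod_cast this
  have hupp : ⌊(2 : ℝ) ^ (j + d) * (x - m)⌋ < 2 ^ d * (b + 1) := by
    rw [Int.floor_lt]
    have := mul_lt_mul_of_pos_left hm2 hpj
    rw [← mul_assoc, hscale] at this
    exact_mod_cast this
  have hshift : ⌊(2 : ℝ) ^ (j + d) * (x + K - 1)⌋ - 2 ^ (j + d) * (i : ℤ)
      - 2 ^ (j + d) * (m + K - 1 - i) = ⌊(2 : ℝ) ^ (j + d) * (x - m)⌋ := by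
    rw [hfloor]
    ring
  refine agree _ (m + K - 1 - i) ?_ ?_
  · rw [hshift]
    omega
  · rw [hshift]
    omega
end
end

section
/- Define r(s, t) := Σ_{k∈ℤ} φ(s−k) φ(t−k) and σ²(t) := r(t, t) (for each s, t these are finite sums). Then σ²(t) > 0 for every t ∈ ℝ, and for all s ≠ t one has the strict inequality r(s, t)² < σ²(s) σ²(t). -/
/-!
For fixed `t` write `v_t = (φ (t - k))_k`, a finitely supported sequence. Pairing with `α0` sends
every `v_t` to `1`, so `v_t ≠ 0`, which is the positivity of the variance. If Cauchy–Schwarz fails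
to be strict for `v_s` and `v_t`, then the two sequences are proportional
(`proportional_of_le_sq`); pairing the relation with `α0` shows that the factor is `1`, and pairing
it with `α1` then gives `s = t`.
-/

open Set

noncomputable section

/-- Compact support of `φ` makes every series over its integer translates a finite sum. -/
lemma finite_support_translates {K : ℝ} {φ : ℝ → ℝ}
    (hφ : ∀ x : ℝ, x ∉ Set.Icc (1 - K) K → φ x = 0) (t : ℝ) :
    (Function.support fun k : ℤ => φ (t - k)).Finite := by
  refine (Set.finite_Icc ⌊t - K⌋ ⌈t - (1 - K)⌉).subset fun k hk => ?_
  have h : t - k ∈ Set.Icc (1 - K) K := by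
    by_contra h
    exact hk (hφ _ h)
  constructor
  · have h1 := Int.floor_le (t - K)
    exact_mod_cast h1.trans (by linarith [h.2] : t - K ≤ k)
  · have h1 := Int.le_ceil (t - (1 - K))
    exact_mod_cast (by linarith [h.1] : (k : ℝ) ≤ t - (1 - K)).trans h1

lemma summable_of_support_subset {a u : ℤ → ℝ} (hu : (Function.support u).Finite)
    (h : ∀ k, u k = 0 → a k = 0) : Summable a :=
  summable_of_hasFiniteSupport (hu.subset fun k hk hk' => hk (h k hk'))

lemma tsum_sq_pos {u : ℤ → ℝ} (hu : (Function.support u).Finite) {k : ℤ} (hk : u k ≠ 0) :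
    0 < ∑' k, u k ^ 2 :=
  (summable_of_support_subset hu fun k h => by simp [h]).tsum_pos
    (fun k => sq_nonneg (u k)) k (by positivity)

/-- The equality case of Cauchy–Schwarz: with `A = ∑ u²` and `B = ∑ u v`, the sum of the squares of
`A v - B u` is `A (A ∑ v² - B²)`, so it vanishes when Cauchy–Schwarz is not strict. -/
lemma proportional_of_le_sq {u v : ℤ → ℝ} (hu : (Function.support u).Finite)
    (hv : (Function.support v).Finite)
    (h : (∑' k, u k ^ 2) * ∑' k, v k ^ 2 ≤ (∑' k, u k * v k) ^ 2) (k : ℤ) :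
    (∑' k, u k ^ 2) * v k = (∑' k, u k * v k) * u k := by
  have su : Summable fun k => u k ^ 2 := summable_of_support_subset hu fun k h => by simp [h]
  have sv : Summable fun k => v k ^ 2 := summable_of_support_subset hv fun k h => by simp [h]
  have suv : Summable fun k => u k * v k := summable_of_support_subset hu fun k h => by simp [h]
  have hA : 0 ≤ ∑' k, u k ^ 2 := tsum_nonneg fun k => sq_nonneg _
  have hu' := su.hasSum
  have hv' := sv.hasSum
  have huv' := suv.hasSum
  generalize (∑' k, u k ^ 2) = A at *
  generalize (∑' k, v k ^ 2) = C at *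
  generalize (∑' k, u k * v k) = B at *
  have hw : HasSum (fun k => (A * v k - B * u k) ^ 2) (A * (A * C - B ^ 2)) := by
    have e := ((hv'.mul_left (A ^ 2)).sub (huv'.mul_left (2 * A * B))).add (hu'.mul_left (B ^ 2))
    rw [show A * (A * C - B ^ 2) = A ^ 2 * C - 2 * A * B * B + B ^ 2 * A by ring]
    refine (congrArg (HasSum · _) (funext fun k => ?_)).mp e
    ring
  have h1 : (A * v k - B * u k) ^ 2 ≤ A * (A * C - B ^ 2) :=
    le_hasSum hw k fun j _ => sq_nonneg _
  have h2 : A * (A * C - B ^ 2) ≤ 0 := mul_nonpos_of_nonneg_of_nonpos hA (by linarith)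
  have h3 : A * v k - B * u k = 0 := by
    rw [← sq_eq_zero_iff]
    exact le_antisymm (h1.trans h2) (sq_nonneg _)
  linarith

/-- For a continuous scaling function `φ` supported on `[1-K, K]` whose
integer translates reproduce the constants and linear functions, the covariance
`r(s,t) = ∑_{k∈ℤ} φ(s-k) φ(t-k)` satisfies `σ²(t) = r(t,t) > 0` for all `t`, and the
strict Cauchy–Schwarz inequality `r(s,t)² < σ²(s) σ²(t)` for all `s ≠ t`. -/
theorem stmt8 (K : ℕ) (hK : 1 ≤ K) (φ : ℝ → ℝ)
    (hφcont : Continuous φ)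
    (hφsupp : ∀ x : ℝ, x ∉ Set.Icc (1 - (K : ℝ)) K → φ x = 0)
    (α0 α1 : ℤ → ℝ)
    (hα0 : ∀ t : ℝ, (∑' k : ℤ, α0 k * φ (t - k)) = 1)
    (hα1 : ∀ t : ℝ, (∑' k : ℤ, α1 k * φ (t - k)) = t) :
    (∀ t : ℝ, 0 < ∑' k : ℤ, φ (t - k) ^ 2) ∧
    ∀ s t : ℝ, s ≠ t →
      (∑' k : ℤ, φ (s - k) * φ (t - k)) ^ 2 <
        (∑' k : ℤ, φ (s - k) ^ 2) * ∑' k : ℤ, φ (t - k) ^ 2 := by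
  have hfin := finite_support_translates hφsupp
  have hpos : ∀ t : ℝ, 0 < ∑' k : ℤ, φ (t - k) ^ 2 := fun t => by
    obtain ⟨k, hk⟩ : ∃ k : ℤ, φ (t - k) ≠ 0 := by
      by_contra! h
      simpa [h] using hα0 t
    exact tsum_sq_pos (hfin t) hk
  refine ⟨hpos, fun s t hst => ?_⟩
  by_contra! hle
  have hprop := proportional_of_le_sq (hfin s) (hfin t) hle
  have hA := hpos s
  generalize (∑' k : ℤ, φ (s - k) ^ 2) = A at *
  generalize (∑' k : ℤ, φ (s - k) * φ (t - k)) = B at *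
  have pair : ∀ α : ℤ → ℝ,
      A * ∑' k : ℤ, α k * φ (t - k) = B * ∑' k : ℤ, α k * φ (s - k) := fun α => by
    rw [← tsum_mul_left, ← tsum_mul_left]
    exact tsum_congr fun k => by linear_combination α k * hprop k
  have h0 := pair α0
  have h1 := pair α1
  rw [hα0, hα0] at h0
  rw [hα1, hα1] at h1
  obtain rfl : A = B := by linarith
  exact hst (mul_left_cancel₀ hA.ne' h1).symm
end
end

section
/- Fix τ₀ > 0. Let (x_n) and (y_n) be real sequences with x_n → 0 and y_n → 0. Then sup_{τ ∈ (0, τ₀]} | (1 − exp(−(1 + x_n) τ) + y_n τ) / (1 − e^{−τ}) − 1 | → 0 as n → ∞. -/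
open Filter Set

/-!
Subtracting `1` turns the quotient into `(e^{-τ}(1 - e^{-xτ}) + yτ) / (1 - e^{-τ})`. On `(0, τ₀]`
the denominator is at least `τ e^{-τ} ≥ τ e^{-τ₀}`, while the numerator is at most
`(|x| e^{|x|τ₀} + |y|) τ` in absolute value. The factor `τ` cancels, so the supremum is at most
`(|x| e^{|x|τ₀} + |y|) e^{τ₀}`, which tends to `0` with `x` and `y`.
-/

lemma abs_exp_sub_one_le_mul_exp (u : ℝ) : |Real.exp u - 1| ≤ |u| * Real.exp |u| := by
  have h1 := Real.add_one_le_exp u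
  have h2 := Real.add_one_le_exp (-u)
  have h3 : Real.exp (-u) * Real.exp u = 1 := by rw [← Real.exp_add]; simp
  have h4 : (-u + 1) * Real.exp u ≤ 1 :=
    (mul_le_mul_of_nonneg_right h2 (Real.exp_pos u).le).trans h3.le
  have h5 : u * Real.exp u ≤ |u| * Real.exp |u| := by
    gcongr <;> exact le_abs_self u
  have h6 : |u| ≤ |u| * Real.exp |u| :=
    le_mul_of_one_le_right (abs_nonneg u) (Real.one_le_exp (abs_nonneg u))
  rw [abs_le]
  constructor
  · linarith [neg_abs_le u]
  · linarith

lemma abs_quotient_sub_one_le (τ₀ a b τ : ℝ) (h0 : 0 < τ) (h1 : τ ≤ τ₀) :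
    |(1 - Real.exp (-(1 + a) * τ) + b * τ) / (1 - Real.exp (-τ)) - 1|
      ≤ (|a| * Real.exp (|a| * τ₀) + |b|) * Real.exp τ₀ := by
  -- `e^τ ≥ 1 + τ`, multiplied by `e^{-τ}`
  have hden : τ * Real.exp (-τ) ≤ 1 - Real.exp (-τ) := by
    have h3 : Real.exp τ * Real.exp (-τ) = 1 := by rw [← Real.exp_add]; simp
    have h4 : (τ + 1) * Real.exp (-τ) ≤ Real.exp τ * Real.exp (-τ) := by
      gcongr; exact Real.add_one_le_exp τ
    linarith
  have hden' : τ * Real.exp (-τ₀) ≤ 1 - Real.exp (-τ) :=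
    le_trans (by gcongr) hden
  have hpos : 0 < 1 - Real.exp (-τ) := lt_of_lt_of_le (by positivity) hden'
  have hsplit : Real.exp (-(1 + a) * τ) = Real.exp (-τ) * Real.exp (-(a * τ)) := by
    rw [← Real.exp_add]; ring_nf
  have hnum : |b * τ - Real.exp (-τ) * (Real.exp (-(a * τ)) - 1)|
      ≤ (|a| * Real.exp (|a| * τ₀) + |b|) * τ := by
    have hu : |Real.exp (-(a * τ)) - 1| ≤ |a| * τ * Real.exp (|a| * τ₀) := by
      refine (abs_exp_sub_one_le_mul_exp _).trans ?_
      rw [abs_neg, abs_mul, abs_of_pos h0]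
      gcongr
    have he : Real.exp (-τ) ≤ 1 := by linarith
    calc _ ≤ |b * τ| + |Real.exp (-τ) * (Real.exp (-(a * τ)) - 1)| := abs_sub _ _
      _ = |b| * τ + Real.exp (-τ) * |Real.exp (-(a * τ)) - 1| := by
        rw [abs_mul, abs_mul, abs_of_pos h0, abs_of_pos (Real.exp_pos _)]
      _ ≤ |b| * τ + 1 * (|a| * τ * Real.exp (|a| * τ₀)) := by gcongr
      _ = _ := by ring
  have heq : (1 - Real.exp (-(1 + a) * τ) + b * τ) / (1 - Real.exp (-τ)) - 1
      = (b * τ - Real.exp (-τ) * (Real.exp (-(a * τ)) - 1)) / (1 - Real.exp (-τ)) := by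
    rw [hsplit, div_sub_one hpos.ne']; ring
  rw [heq, abs_div, abs_of_pos hpos, div_le_iff₀ hpos]
  have h7 : Real.exp τ₀ * Real.exp (-τ₀) = 1 := by rw [← Real.exp_add]; simp
  calc _ ≤ _ := hnum
    _ = (|a| * Real.exp (|a| * τ₀) + |b|) * Real.exp τ₀ * (τ * Real.exp (-τ₀)) := by
      linear_combination (-(|a| * Real.exp (|a| * τ₀) + |b|) * τ) * h7
    _ ≤ _ := by gcongr

/-- If `x_n → 0` and `y_n → 0`, then
`sup_{τ ∈ (0,τ₀]} | (1 - exp(-(1+x_n)τ) + y_n τ)/(1 - e^{-τ}) - 1 | → 0`. -/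
theorem stmt11 (τ₀ : ℝ) (hτ₀ : 0 < τ₀) (x y : ℕ → ℝ)
    (hx : Tendsto x atTop (nhds 0)) (hy : Tendsto y atTop (nhds 0)) :
    Tendsto (fun n : ℕ => ⨆ τ : Set.Ioc (0 : ℝ) τ₀,
        |(1 - Real.exp (-(1 + x n) * τ) + y n * τ) / (1 - Real.exp (-τ)) - 1|)
      atTop (nhds 0) := by
  have hlim : Tendsto (fun n => (|x n| * Real.exp (|x n| * τ₀) + |y n|) * Real.exp τ₀)
      atTop (nhds 0) := by
    have hc : Continuous (fun p : ℝ × ℝ =>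
        (|p.1| * Real.exp (|p.1| * τ₀) + |p.2|) * Real.exp τ₀) := by fun_prop
    simpa [Function.comp_def] using (hc.tendsto (0, 0)).comp (hx.prodMk_nhds hy)
  refine squeeze_zero (fun n => Real.iSup_nonneg fun τ => abs_nonneg _) (fun n => ?_) hlim
  exact Real.iSup_le (fun τ => abs_quotient_sub_one_le τ₀ _ _ τ τ.2.1 τ.2.2) (by positivity)
end

section
/- Let γ ∈ (0,1), η ∈ (0, (1−γ)/(1+γ)), and τ₀ > 0. For T > 0 and τ ∈ (0, τ₀] with T/τ ≥ e², define u(τ, T) := √( 2 log(T/τ) − log log(T/τ) ). Then sup_{τ ∈ (0, τ₀]} τ^η (T/τ)^{1+η} u(τ, T) exp( −u(τ, T)² / (1+γ) ) → 0 as T → ∞. -/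
open Filter Set

noncomputable section

/-- `u(τ, T) = √(2 log(T/τ) - log log(T/τ))`. -/
def uTT (τ T : ℝ) : ℝ := Real.sqrt (2 * Real.log (T / τ) - Real.log (Real.log (T / τ)))

/-!
Put `L = log (T/τ)` and `δ = (1-γ)/(1+γ) - η > 0`, so that `2/(1+γ) = 1 + η + δ`. Since
`u² = 2L - log L`, the factors `(T/τ)^(1+η)` and `exp (-u²/(1+γ))` multiply to
`L^(1/(1+γ)) * exp (-δ L)`, which is at most `L * exp (-δ L)` once `L ≥ 1`. Together with `u ≤ 2L`
and `L² ≤ (16/δ²) * exp (δ L / 2)` this bounds the term by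
`τ₀^η * (32/δ²) * exp (-δ/2 * log (T/τ₀))`, uniformly in `τ ∈ (0, τ₀]`, and this bound tends
to `0`.
-/

lemma term_bound {γ η τ₀ τ T : ℝ} (hγ0 : 0 < γ) (hη0 : 0 < η)
    (hδ : 0 < (1 - γ) / (1 + γ) - η) (hτ : 0 < τ) (hττ : τ ≤ τ₀) (hT : 0 < T)
    (hL0 : 1 ≤ Real.log (T / τ₀)) :
    τ ^ η * (T / τ) ^ (1 + η) * uTT τ T * Real.exp (-uTT τ T ^ 2 / (1 + γ)) ≤
      τ₀ ^ η * (32 / ((1 - γ) / (1 + γ) - η) ^ 2) *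
        Real.exp (-(((1 - γ) / (1 + γ) - η) / 2) * Real.log (T / τ₀)) := by
  have hx : 0 < T / τ := by positivity
  have hτ₀ : 0 < τ₀ := hτ.trans_le hττ
  have hLL : Real.log (T / τ₀) ≤ Real.log (T / τ) :=
    Real.log_le_log (by positivity) (by gcongr)
  unfold uTT
  rw [Real.rpow_def_of_pos hx]
  set δ := (1 - γ) / (1 + γ) - η with hδdef
  set L := Real.log (T / τ)
  have hL : 1 ≤ L := hL0.trans hLL
  have hlog0 : 0 ≤ Real.log L := Real.log_nonneg hL
  have hlog1 : Real.log L ≤ L - 1 := Real.log_le_sub_one_of_pos (by linarith)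
  rw [Real.sq_sqrt (by linarith)]
  have hu : Real.sqrt (2 * L - Real.log L) ≤ 2 * L := by
    rw [Real.sqrt_le_left (by linarith)]
    nlinarith
  have hexp : Real.exp (L * (1 + η)) * Real.exp (-(2 * L - Real.log L) / (1 + γ))
      ≤ L * Real.exp (-δ * L) := by
    have h1 : L * (1 + η) + -(2 * L - Real.log L) / (1 + γ)
        = Real.log L / (1 + γ) + -δ * L := by
      rw [hδdef]; field_simp; ring
    rw [← Real.exp_add, h1, Real.exp_add]
    gcongr
    calc Real.exp (Real.log L / (1 + γ)) ≤ Real.exp (Real.log L) := by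
          gcongr; exact div_le_self hlog0 (by linarith)
      _ = L := Real.exp_log (by linarith)
  have hsq : L ^ 2 ≤ 16 / δ ^ 2 * Real.exp (δ / 2 * L) := by
    have h1 : δ / 4 * L ≤ Real.exp (δ / 4 * L) := by
      linarith [Real.add_one_le_exp (δ / 4 * L)]
    have h2 : Real.exp (δ / 2 * L) = Real.exp (δ / 4 * L) ^ 2 := by
      rw [← Real.exp_nat_mul]; congr 1; push_cast; ring
    calc L ^ 2 = 16 / δ ^ 2 * (δ / 4 * L) ^ 2 := by field_simp; ring
      _ ≤ _ := by rw [h2]; gcongr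
  calc τ ^ η * Real.exp (L * (1 + η)) * Real.sqrt (2 * L - Real.log L)
        * Real.exp (-(2 * L - Real.log L) / (1 + γ))
      = τ ^ η * (Real.sqrt (2 * L - Real.log L) * (Real.exp (L * (1 + η))
        * Real.exp (-(2 * L - Real.log L) / (1 + γ)))) := by ring
    _ ≤ τ₀ ^ η * (2 * L * (L * Real.exp (-δ * L))) := by gcongr
    _ = τ₀ ^ η * (2 * L ^ 2 * Real.exp (-δ * L)) := by ring
    _ ≤ τ₀ ^ η * (2 * (16 / δ ^ 2 * Real.exp (δ / 2 * L)) * Real.exp (-δ * L)) := by gcongr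
    _ = τ₀ ^ η * (32 / δ ^ 2) * Real.exp (-(δ / 2) * L) := by
      have : Real.exp (-(δ / 2) * L) = Real.exp (δ / 2 * L) * Real.exp (-δ * L) := by
        rw [← Real.exp_add]; congr 1; ring
      rw [this]; ring
    _ ≤ _ := by
      gcongr τ₀ ^ η * (32 / δ ^ 2) * Real.exp ?_
      nlinarith

/-- For `γ ∈ (0,1)`, `0 < η < (1-γ)/(1+γ)` and `τ₀ > 0`,
`sup_{τ ∈ (0,τ₀]} τ^η (T/τ)^{1+η} u(τ,T) exp(-u(τ,T)²/(1+γ)) → 0` as `T → ∞`. -/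
theorem stmt12 (γ η τ₀ : ℝ) (hγ : γ ∈ Set.Ioo (0 : ℝ) 1)
    (hη : η ∈ Set.Ioo (0 : ℝ) ((1 - γ) / (1 + γ))) (hτ₀ : 0 < τ₀) :
    Tendsto (fun T : ℝ => ⨆ τ : Set.Ioc (0 : ℝ) τ₀,
        (τ : ℝ) ^ η * (T / τ) ^ (1 + η) * uTT τ T * Real.exp (-uTT τ T ^ 2 / (1 + γ)))
      atTop (nhds 0) := by
  obtain ⟨hγ0, -⟩ := hγ
  obtain ⟨hη0, hη1⟩ := hη
  have hδ : 0 < (1 - γ) / (1 + γ) - η := sub_pos.2 hη1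
  have hlog : Tendsto (fun T : ℝ => Real.log (T / τ₀)) atTop atTop :=
    Real.tendsto_log_atTop.comp (tendsto_id.atTop_div_const hτ₀)
  have hlim : Tendsto (fun T : ℝ => τ₀ ^ η * (32 / ((1 - γ) / (1 + γ) - η) ^ 2) *
        Real.exp (-(((1 - γ) / (1 + γ) - η) / 2) * Real.log (T / τ₀))) atTop (nhds 0) := by
    have h := Real.tendsto_exp_atBot.comp
      (hlog.const_mul_atTop_of_neg (r := -(((1 - γ) / (1 + γ) - η) / 2)) (by linarith))
    simpa using h.const_mul (τ₀ ^ η * (32 / ((1 - γ) / (1 + γ) - η) ^ 2))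
  refine tendsto_of_tendsto_of_tendsto_of_le_of_le' tendsto_const_nhds hlim ?_ ?_
  · filter_upwards [eventually_gt_atTop 0] with T hT
    refine Real.iSup_nonneg fun τ => ?_
    have hτ : 0 < (τ : ℝ) := τ.2.1
    have hu : 0 ≤ uTT τ T := Real.sqrt_nonneg _
    positivity
  · filter_upwards [eventually_gt_atTop 0, hlog.eventually_ge_atTop 1] with T hT hL
    exact Real.iSup_le (fun τ => term_bound hγ0 hη0 hδ τ.2.1 τ.2.2 hT hL) (by positivity)
end
end

section
/- Fix real constants υ > −1 and C > 0, define a(j) := √(2 (log 2) j), b(j) := a(j) − (log(π log 2) + log j − ½ log(1+υ))/(2 a(j)), and x(γ) := −log(−log(1−γ)). Let j_n → ∞, let γ₀ ∈ (0,1), and let γ_n ∈ (0, γ₀] satisfy log(1/γ_n) = o(j_n). Set u_n := x(γ_n)/a(j_n) + b(j_n). Then u_n → ∞ and exp(−C² u_n² / 2) / u_n = o(γ_n) as n → ∞. -/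
/-! Write `u_n = x(γ_n) / a(j_n) + b(j_n)`. Since `γ_n ≤ γ₀`, the quantity `x(γ_n)` is bounded below
by `x(γ₀)`, and as `log j = o(j)` while `a(j)² = 2 (log 2) j`, the corrections to the leading term
`a(j_n)` are eventually at most half of it: `u_n ≥ a(j_n) / 2` (`half_aseq_le`). Hence `u_n → ∞`.
Moreover `exp (-C² u_n² / 2) ≤ exp (-c j_n)` with `c = C² (log 2) / 4`, and `log (1 / γ_n) = o(j_n)`
says that `exp (-c j_n) ≤ γ_n` eventually. The quotient in the statement is then at most
`γ_n / u_n = o(γ_n)`. -/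

open Filter Set Real Asymptotics

noncomputable section

/-- `a(j) = √(2 (log 2) j)`. -/
def aseq (j : ℝ) : ℝ := Real.sqrt (2 * Real.log 2 * j)

/-- `b(j) = a(j) - (log(π log 2) + log j - ½ log(1 + υ)) / (2 a(j))`. -/
def bseq (υ : ℝ) (j : ℝ) : ℝ :=
  aseq j - (Real.log (π * Real.log 2) + Real.log j - (1 / 2) * Real.log (1 + υ)) / (2 * aseq j)

/-- `x(γ) = -log(-log(1-γ))`. -/
def xgam (γ : ℝ) : ℝ := -Real.log (-Real.log (1 - γ))

lemma xgam_anti {γ γ₀ : ℝ} (h0 : 0 < γ) (h : γ ≤ γ₀) (h1 : γ₀ < 1) : xgam γ₀ ≤ xgam γ := by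
  unfold xgam
  have hneg : Real.log (1 - γ) < 0 := Real.log_neg (by linarith) (by linarith)
  have hle : Real.log (1 - γ₀) ≤ Real.log (1 - γ) := Real.log_le_log (by linarith) (by linarith)
  have := Real.log_le_log (by linarith : 0 < -Real.log (1 - γ)) (neg_le_neg hle)
  linarith

/-- After multiplication by `a(j)`, the bound `a(j) / 2 ≤ x / a(j) + b(j)` for all `x ≥ m` amounts
to `log j / 2 + O(1) ≤ (log 2) j`, which holds for large `j`. -/
lemma half_aseq_le (υ m : ℝ) :
    ∀ᶠ t : ℝ in atTop, ∀ x, m ≤ x → aseq t / 2 ≤ x / aseq t + bseq υ t := by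
  have hl2 : 0 < Real.log 2 := Real.log_pos (by norm_num)
  set K := Real.log (π * Real.log 2) - (1 / 2) * Real.log (1 + υ) with hK
  have h1 := Real.isLittleO_log_id_atTop.bound hl2
  have h2 := (tendsto_id.const_mul_atTop (half_pos hl2)).eventually_ge_atTop (K / 2 - m)
  filter_upwards [h1, h2, eventually_gt_atTop 0] with t h1 h2 ht x hx
  simp only [id, Real.norm_eq_abs, abs_of_pos ht] at h1 h2
  have h1' := (le_abs_self _).trans h1
  have ha : 0 < aseq t := Real.sqrt_pos.2 (by positivity)
  have ha2 : aseq t ^ 2 = 2 * Real.log 2 * t := Real.sq_sqrt (by positivity)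
  have key : x / aseq t + bseq υ t - aseq t / 2
      = (x + aseq t ^ 2 / 2 - (K + Real.log t) / 2) / aseq t := by
    unfold bseq
    rw [hK]
    field_simp
    ring
  have : 0 ≤ (x + aseq t ^ 2 / 2 - (K + Real.log t) / 2) / aseq t := by
    apply div_nonneg _ ha.le
    rw [ha2]
    linarith
  linarith

lemma tendsto_aseq : Tendsto aseq atTop atTop := by
  have hl2 : 0 < Real.log 2 := Real.log_pos (by norm_num)
  exact Real.tendsto_sqrt_atTop.comp
    (tendsto_id.const_mul_atTop (by positivity : 0 < 2 * Real.log 2))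

/-- If `j_n → ∞`, `γ_n ∈ (0, γ₀]` with `log(1/γ_n) = o(j_n)`, and
`u_n = x(γ_n)/a(j_n) + b(j_n)`, then `u_n → ∞` and `exp(-C² u_n²/2)/u_n = o(γ_n)`. -/
theorem stmt15 (υ C : ℝ) (hυ : -1 < υ) (hC : 0 < C)
    (j : ℕ → ℕ) (hj : Tendsto j atTop atTop)
    (γ₀ : ℝ) (hγ₀ : γ₀ ∈ Set.Ioo (0 : ℝ) 1)
    (γ : ℕ → ℝ) (hγ : ∀ n, γ n ∈ Set.Ioc (0 : ℝ) γ₀)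
    (hlog : (fun n : ℕ => Real.log (1 / γ n)) =o[atTop] fun n : ℕ => (j n : ℝ)) :
    Tendsto (fun n : ℕ => xgam (γ n) / aseq (j n) + bseq υ (j n)) atTop atTop ∧
    (fun n : ℕ =>
        Real.exp (-C ^ 2 * (xgam (γ n) / aseq (j n) + bseq υ (j n)) ^ 2 / 2) /
          (xgam (γ n) / aseq (j n) + bseq υ (j n))) =o[atTop] fun n : ℕ => γ n := by
  have hl2 : 0 < Real.log 2 := Real.log_pos (by norm_num)
  have hjR : Tendsto (fun n => (j n : ℝ)) atTop atTop := tendsto_natCast_atTop_atTop.comp hj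
  have ha : Tendsto (fun n => aseq (j n)) atTop atTop := tendsto_aseq.comp hjR
  set u : ℕ → ℝ := fun n => xgam (γ n) / aseq (j n) + bseq υ (j n) with hu
  have hlow : ∀ᶠ n in atTop, aseq (j n) / 2 ≤ u n := by
    filter_upwards [hjR.eventually (half_aseq_le υ (xgam γ₀))] with n hn
    exact hn _ (xgam_anti (hγ n).1 (hγ n).2 hγ₀.2)
  have hutop : Tendsto u atTop atTop :=
    tendsto_atTop_mono' _ hlow (ha.atTop_div_const two_pos)
  refine ⟨hutop, ?_⟩
  have hexp : ∀ᶠ n in atTop, Real.exp (-C ^ 2 * u n ^ 2 / 2) ≤ γ n := by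
    have hc : 0 < C ^ 2 * Real.log 2 / 4 := by positivity
    filter_upwards [hlow, hlog.bound hc] with n h1 h2
    have hγn := (hγ n).1
    have h3 : -Real.log (γ n) ≤ C ^ 2 * Real.log 2 / 4 * j n := by
      have := (le_abs_self _).trans h2
      rwa [one_div, Real.log_inv, Real.norm_eq_abs, Nat.abs_cast] at this
    have ha0 : 0 ≤ aseq (j n) := Real.sqrt_nonneg _
    have ha2 : aseq (j n) ^ 2 = 2 * Real.log 2 * j n := Real.sq_sqrt (by positivity)
    have h4 : (aseq (j n) / 2) ^ 2 ≤ u n ^ 2 := pow_le_pow_left₀ (by positivity) h1 2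
    have h5 := mul_le_mul_of_nonneg_left h4 (sq_nonneg C)
    rw [← Real.le_log_iff_exp_le hγn]
    rw [div_pow, ha2] at h5
    linarith
  have hquot : (fun n => Real.exp (-C ^ 2 * u n ^ 2 / 2) / u n) =O[atTop] fun n => γ n * (u n)⁻¹ := by
    refine IsBigO.of_bound 1 ?_
    filter_upwards [hexp, hutop.eventually_gt_atTop 0] with n h1 h2
    have hγn := (hγ n).1
    rw [Real.norm_of_nonneg (by positivity), Real.norm_of_nonneg (by positivity), one_mul,
      div_eq_mul_inv]
    gcongr
  refine hquot.trans_isLittleO ?_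
  have hinv : (fun n => (u n)⁻¹) =o[atTop] fun _ => (1 : ℝ) :=
    (isLittleO_one_iff ℝ).2 (tendsto_inv_atTop_zero.comp hutop)
  simpa using (isBigO_refl γ atTop).mul_isLittleO hinv
end
end
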